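/- Let M = cQ + εD ∈ 𝔻ℍ[t] be a bounded monic reduced motion polynomial with c ∈ ℝ[t], Q, D ∈ ℍ[t], and mrpf(Q) = 1. Let g ∈ ℝ[t] be the greatest common monic real polynomial divisor of c, Q*·D, and D·Q*. If c·g divides D·D* in ℝ[t], then M admits a factorization into monic linear motion polynomial factors. -/

import Mathlib

open Polynomial DualNumber TrivSqZeroExt

noncomputable section

/-- The real quaternions. -/
abbrev Hq : Type := Quaternion ℝ

/-- The dual quaternions. -/
abbrev DHq : Type := DualNumber Hq

/-- Conjugation of a dual quaternion: `(p + ε d)* = p* + ε d*`. -/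
instance : Star DHq := ⟨fun x => inl (star x.fst) + inr (star x.snd)⟩

/-- Coefficient-wise (quaternion) conjugation of a polynomial. -/
def cstar {R : Type*} [Semiring R] [Star R] (A : R[X]) : R[X] :=
  A.sum fun n a => Polynomial.C (star a) * Polynomial.X ^ n

/-- The embedding `ℝ[t] → ℍ[t]`. -/
def qPoly (f : ℝ[X]) : Hq[X] := f.map (algebraMap ℝ Hq)

/-- The embedding `ℍ[t] → 𝔻ℍ[t]` (primal part). -/
def dhQ (P : Hq[X]) : DHq[X] := P.map (inlHom Hq Hq)

/-- The embedding `ℝ[t] → 𝔻ℍ[t]`. -/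
def dPoly (f : ℝ[X]) : DHq[X] := dhQ (qPoly f)

/-- The dual quaternion polynomial `P + ε D` with primal part `P` and dual part `D`. -/
def mp (P D : Hq[X]) : DHq[X] := dhQ P + Polynomial.C ε * dhQ D

/-- The primal part of a dual quaternion polynomial. -/
def primal (A : DHq[X]) : Hq[X] := A.map (fstHom ℝ Hq Hq).toRingHom

/-- A motion polynomial: a dual quaternion polynomial whose norm polynomial
`ν(M) = M·M*` is a nonzero real polynomial. -/
def IsMotion (M : DHq[X]) : Prop := ∃ f : ℝ[X], f ≠ 0 ∧ M * cstar M = dPoly f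

/-- A real polynomial divides a quaternion polynomial. -/
def RDvdQ (f : ℝ[X]) (A : Hq[X]) : Prop := ∃ B : Hq[X], A = qPoly f * B

/-- A real polynomial divides a dual quaternion polynomial. -/
def RDvdD (f : ℝ[X]) (A : DHq[X]) : Prop := ∃ B : DHq[X], A = dPoly f * B

/-- `g` is the greatest common monic real polynomial divisor of a quaternion polynomial `A`
(with itself), i.e. `g = mrpf A`. -/
def IsMrpfQ (g : ℝ[X]) (A : Hq[X]) : Prop :=
  g.Monic ∧ RDvdQ g A ∧ ∀ f : ℝ[X], f.Monic → RDvdQ f A → f ∣ g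

/-- `g` is the greatest common monic real polynomial divisor of `c ∈ ℝ[t]` and a quaternion
polynomial `A`, i.e. `g = mrpf(c, A)`. -/
def IsMrpf2 (g : ℝ[X]) (c : ℝ[X]) (A : Hq[X]) : Prop :=
  g.Monic ∧ g ∣ c ∧ RDvdQ g A ∧
    ∀ f : ℝ[X], f.Monic → f ∣ c → RDvdQ f A → f ∣ g

/-- `g` is the greatest common monic real polynomial divisor of `c ∈ ℝ[t]` and two quaternion
polynomials `A` and `B`, i.e. `g = mrpf(c, A, B)`. -/
def IsMrpf3 (g : ℝ[X]) (c : ℝ[X]) (A B : Hq[X]) : Prop :=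
  g.Monic ∧ g ∣ c ∧ RDvdQ g A ∧ RDvdQ g B ∧
    ∀ f : ℝ[X], f.Monic → f ∣ c → RDvdQ f A → RDvdQ f B → f ∣ g

/-- A quaternion polynomial is reduced: `mrpf = 1`, i.e. it has only constant real
polynomial factors. -/
def ReducedQ (A : Hq[X]) : Prop := ∀ f : ℝ[X], f.Monic → RDvdQ f A → f = 1

/-- A dual quaternion polynomial is reduced: `mrpf = 1`. -/
def ReducedD (A : DHq[X]) : Prop := ∀ f : ℝ[X], f.Monic → RDvdD f A → f = 1

/-- Boundedness of a (monic reduced) motion polynomial: `mrpf` of its primal part has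
no real root, equivalently no linear real polynomial `t - a` divides the primal part. -/
def BoundedD (M : DHq[X]) : Prop :=
  ∀ a : ℝ, ¬ RDvdQ (Polynomial.X - Polynomial.C a) (primal M)

/-- A generic motion polynomial: monic, a motion polynomial, with `mrpf` of the primal
part equal to `1`. -/
def GenericD (M : DHq[X]) : Prop :=
  M.Monic ∧ IsMotion M ∧ ReducedQ (primal M)

/-- The monic linear dual quaternion polynomial `t - p - ε d`. -/
def lin (p d : Hq) : DHq[X] := mp (Polynomial.X - Polynomial.C p) (-Polynomial.C d)

/-- `M` admits a factorization into monic linear motion polynomial factors. -/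
def HasLinFact (M : DHq[X]) : Prop :=
  ∃ L : List DHq, (∀ h ∈ L, IsMotion (Polynomial.X - Polynomial.C h)) ∧
    M = (L.map fun h => Polynomial.X - Polynomial.C h).prod

end

/-!
A quaternion polynomial is viewed as a quaternion over `ℝ[t]`, and linear motion polynomials are
split off from `M = P + ε D` one at a time, on either side, along the irreducible factors `N` of
`P P*`. The hypothesis on `c g` becomes a condition at each `N` separately, and splitting off a
factor of norm `N` can only affect the condition at `N`. If `N ∤ P`, division with remainder gives
a factor `t - p - ε d` of `M` with `(t - p)(t - p)* = N`, and the condition at `N` is vacuous for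
the quotient. If `N ∣ P`, the condition gives `N ∣ D D*`, hence `D = D₁ (t - p)` and
`P = B (t - p)* (t - p)`; then `B (t - p)* + ε (D₁ + B d)` is a quotient of `M` for every `d` that
makes `t - p - ε d` a motion polynomial. When `D P*` contains at most as many factors `N` as
`P* D`, the condition at `N` survives for `d = 0` or else for every `d ≠ 0`; otherwise conjugation
exchanges the two sides.
-/

namespace MotionPolynomial

open scoped Quaternion

section CentralDivisibility

variable {R : Type*} [CommRing R] {r s : R} {A B : ℍ[R]}

theorem coe_dvd_iff :
    (r : ℍ[R]) ∣ A ↔ r ∣ A.re ∧ r ∣ A.imI ∧ r ∣ A.imJ ∧ r ∣ A.imK := by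
  constructor
  · rintro ⟨B, rfl⟩
    simp [Quaternion.coe_mul_eq_smul]
  · rintro ⟨⟨a, ha⟩, ⟨b, hb⟩, ⟨c, hc⟩, ⟨d, hd⟩⟩
    obtain ⟨B, rfl, rfl, rfl, rfl⟩ :
        ∃ B : ℍ[R], B.re = a ∧ B.imI = b ∧ B.imJ = c ∧ B.imK = d :=
      ⟨⟨a, b, c, d⟩, rfl, rfl, rfl, rfl⟩
    exact ⟨B, by rw [Quaternion.coe_mul_eq_smul]; ext <;> simpa⟩

theorem coe_dvd_coe_iff : (r : ℍ[R]) ∣ (s : ℍ[R]) ↔ r ∣ s := by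
  simp [coe_dvd_iff]

theorem coe_dvd_smul (h : r ∣ s) (A : ℍ[R]) : (r : ℍ[R]) ∣ s • A := by
  rw [← Quaternion.coe_mul_eq_smul]
  exact (coe_dvd_coe_iff.2 h).mul_right A

theorem coe_dvd_mul_left (h : (r : ℍ[R]) ∣ B) (A : ℍ[R]) : (r : ℍ[R]) ∣ A * B := by
  obtain ⟨C, rfl⟩ := h
  exact ⟨A * C, by rw [← mul_assoc, ← Quaternion.coe_commutes r A, mul_assoc]⟩

theorem coe_dvd_star_iff : (r : ℍ[R]) ∣ star A ↔ (r : ℍ[R]) ∣ A := by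
  simp [coe_dvd_iff]

theorem coe_dvd_star_mul_star_iff : (r : ℍ[R]) ∣ star A * star B ↔ (r : ℍ[R]) ∣ B * A := by
  rw [← star_mul, coe_dvd_star_iff]

theorem forall_coe_pow_dvd_imp_or (r : R) (A B : ℍ[R]) :
    (∀ m, ((r ^ m : R) : ℍ[R]) ∣ A → ((r ^ m : R) : ℍ[R]) ∣ B) ∨
      ∀ m, ((r ^ m : R) : ℍ[R]) ∣ B → ((r ^ m : R) : ℍ[R]) ∣ A := by
  by_contra! ⟨⟨m, hAm, hBm⟩, k, hBk, hAk⟩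
  rcases le_total m k with hmk | hkm
  · exact hBm ((coe_dvd_coe_iff.2 (pow_dvd_pow r hmk)).trans hBk)
  · exact hAk ((coe_dvd_coe_iff.2 (pow_dvd_pow r hkm)).trans hAm)

theorem sq_dvd_normSq (h : (r : ℍ[R]) ∣ A) : r ^ 2 ∣ Quaternion.normSq A := by
  obtain ⟨B, rfl⟩ := h
  rw [Quaternion.coe_mul_eq_smul, Quaternion.normSq_smul]
  exact dvd_mul_right _ _

theorem exists_not_dvd_re_mul (h : ¬ (r : ℍ[R]) ∣ A) : ∃ Z : ℍ[R], ¬ r ∣ (A * Z).re := by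
  by_contra! hr
  simp only [Quaternion.re_mul] at hr
  exact h (coe_dvd_iff.2 ⟨by simpa using hr 1, by simpa using hr ⟨0, 1, 0, 0⟩,
    by simpa using hr ⟨0, 0, 1, 0⟩, by simpa using hr ⟨0, 0, 0, 1⟩⟩)

theorem mul_mul_add_star_mul_star (T Z Q : ℍ[R]) :
    T * (Z * Q) + star Q * star (T * Z) = ((2 * (Q * T * Z).re : R) : ℍ[R]) := by
  ext <;> simp <;> ring

variable [IsDomain R] {p : R}

theorem coe_mul_dvd_smul_iff (hs : s ≠ 0) :
    ((s * r : R) : ℍ[R]) ∣ s • A ↔ (r : ℍ[R]) ∣ A := by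
  simp only [coe_dvd_iff, Quaternion.re_smul, Quaternion.imI_smul, Quaternion.imJ_smul,
    Quaternion.imK_smul, smul_eq_mul, mul_dvd_mul_iff_left hs]

theorem coe_pow_dvd_of_dvd_smul (hp : Prime p) {n : ℕ} (hs : ¬ p ∣ s)
    (h : ((p ^ n : R) : ℍ[R]) ∣ s • A) : ((p ^ n : R) : ℍ[R]) ∣ A := by
  simp only [coe_dvd_iff, Quaternion.re_smul, Quaternion.imI_smul, Quaternion.imJ_smul,
    Quaternion.imK_smul, smul_eq_mul] at h ⊢
  exact h.imp (hp.pow_dvd_of_dvd_mul_left n hs) <| And.imp (hp.pow_dvd_of_dvd_mul_left n hs) <|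
    And.imp (hp.pow_dvd_of_dvd_mul_left n hs) (hp.pow_dvd_of_dvd_mul_left n hs)

/-- If `Z` is chosen with `p ∤ 2 re (Q T Z)`, the two hypotheses on `E` combine to
`p ^ n ∣ 2 re (Q T Z) E`. -/
theorem coe_pow_dvd_of_dvd_mul_of_dvd_mul_star (hp : Prime p) (hp2 : ¬ p ∣ 2) {n : ℕ}
    {E T Q : ℍ[R]} (hT : ((p ^ n : R) : ℍ[R]) ∣ E * T) (hQ : ((p ^ n : R) : ℍ[R]) ∣ E * star Q)
    (hQT : ¬ (p : ℍ[R]) ∣ Q * T) : ((p ^ n : R) : ℍ[R]) ∣ E := by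
  obtain ⟨Z, hZ⟩ := exists_not_dvd_re_mul hQT
  refine coe_pow_dvd_of_dvd_smul hp (s := 2 * (Q * T * Z).re)
    (fun h => (hp.dvd_or_dvd h).elim hp2 hZ) ?_
  rw [← Quaternion.mul_coe_eq_smul, ← mul_mul_add_star_mul_star, mul_add, ← mul_assoc,
    ← mul_assoc E]
  exact dvd_add (hT.mul_right _) (hQ.mul_right _)

end CentralDivisibility

section NormCondition

variable {R : Type*} [CommRing R] {p : R} {P D T δ : ℍ[R]}

/-- The `p`-primary part of the condition `c g ∣ D D*` on `c Q + ε D`, where `p ∤ Q` and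
`g` is the greatest common real divisor of `c`, `Q* D` and `D Q*`, expressed in terms of `P = c Q`
and `D` alone: for `p ^ a ∥ c` and `p ^ b ∥ g`, the largest admissible `m` is `a + b`. -/
def NormCondition (p : R) (P D : ℍ[R]) : Prop :=
  ∀ a m, m ≤ 2 * a → ((p ^ a : R) : ℍ[R]) ∣ P → ((p ^ m : R) : ℍ[R]) ∣ star P * D →
    ((p ^ m : R) : ℍ[R]) ∣ D * star P → p ^ m ∣ Quaternion.normSq D

theorem NormCondition.conj (h : NormCondition p P D) : NormCondition p (star P) (star D) := by
  intro a m hm hP hPD hDP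
  rw [Quaternion.normSq_star]
  exact h a m hm (coe_dvd_star_iff.1 hP) (coe_dvd_star_mul_star_iff.1 hDP)
    (coe_dvd_star_mul_star_iff.1 hPD)

theorem NormCondition.of_not_dvd (h : ¬ (p : ℍ[R]) ∣ P) : NormCondition p P D := by
  intro a m hm hP _ _
  obtain rfl : a = 0 := by
    by_contra ha
    exact h ((coe_dvd_coe_iff.2 (dvd_pow_self p ha)).trans hP)
  simp [Nat.le_zero.1 hm]

theorem normSq_add_eq_star_mul (A B : ℍ[R]) : Quaternion.normSq (A + B) =
    Quaternion.normSq A + Quaternion.normSq B + 2 * (star A * B).re := by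
  rw [← Quaternion.normSq_star, star_add, Quaternion.normSq_add, star_star,
    Quaternion.normSq_star, Quaternion.normSq_star]

theorem coe_pow_dvd_mul_mul_star {a m : ℕ} (hm : m ≤ 2 * a) (hP : ((p ^ a : R) : ℍ[R]) ∣ P)
    (Z : ℍ[R]) : ((p ^ m : R) : ℍ[R]) ∣ P * Z * star P := by
  obtain ⟨B, rfl⟩ := hP
  refine (coe_dvd_coe_iff.2 (pow_dvd_pow p hm)).trans ⟨B * Z * star B, ?_⟩
  simp only [Quaternion.coe_mul_eq_smul, Quaternion.star_smul, smul_mul_assoc, mul_smul_comm,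
    smul_smul]
  ring_nf

theorem NormCondition.of_mul_right [IsDomain R] (hp : Prime p) (hT : ¬ p ∣ Quaternion.normSq T)
    (h : NormCondition p (P * T) (D * T - P * δ)) : NormCondition p P D := by
  intro a m hm hP hPD hDP
  have hPP : ((p ^ m : R) : ℍ[R]) ∣ ((Quaternion.normSq P : R) : ℍ[R]) :=
    coe_dvd_coe_iff.2 ((pow_dvd_pow p hm).trans
      (by simpa [pow_mul, mul_comm] using sq_dvd_normSq hP))
  have hE : ((p ^ m : R) : ℍ[R]) ∣ star P * (D * T - P * δ) := by
    rw [mul_sub, ← mul_assoc, ← mul_assoc, Quaternion.star_mul_self]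
    exact dvd_sub (hPD.mul_right _) (hPP.mul_right _)
  have hνE : p ^ m ∣ Quaternion.normSq (D * T - P * δ) := by
    refine h a m hm (hP.mul_right _) ?_ ?_
    · rw [star_mul, mul_assoc]
      exact coe_dvd_mul_left hE _
    · have hsplit : (D * T - P * δ) * star (P * T) =
          Quaternion.normSq T • (D * star P) - P * (δ * star T) * star P := by
        rw [← Quaternion.mul_coe_eq_smul, mul_assoc D, ← Quaternion.coe_commutes,
          ← Quaternion.self_mul_star, star_mul]
        noncomm_ring
      rw [hsplit, ← Quaternion.mul_coe_eq_smul]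
      exact dvd_sub (hDP.mul_right _) (coe_pow_dvd_mul_mul_star hm hP _)
  have hνDT : p ^ m ∣ Quaternion.normSq D * Quaternion.normSq T := by
    rw [← map_mul, ← sub_add_cancel (D * T) (P * δ), normSq_add_eq_star_mul]
    refine dvd_add (dvd_add hνE ?_) (Dvd.dvd.mul_left ?_ _)
    · rw [map_mul]
      exact (coe_dvd_coe_iff.1 hPP).mul_right _
    · rw [← mul_assoc, ← star_star P, ← star_mul, star_star]
      exact (coe_dvd_iff.1 ((coe_dvd_star_iff.2 hE).mul_right δ)).1
  exact hp.pow_dvd_of_dvd_mul_right m hT hνDT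

end NormCondition

section LocalStep

variable {R : Type*} [CommRing R] {p : R} {B D Q T δ : ℍ[R]}

theorem mul_mul_star_smul (p : R) (B D T : ℍ[R]) :
    D * T * star (p • B) = p • (D * star (B * star T)) := by
  rw [Quaternion.star_smul, mul_smul_comm, star_mul, star_star, mul_assoc]

theorem smul_eq_mul_star_mul (hT : Quaternion.normSq T = p) (B : ℍ[R]) :
    p • B = B * star T * T := by
  rw [mul_assoc, Quaternion.star_mul_self, hT, Quaternion.mul_coe_eq_smul]

variable [IsDomain R]

theorem exists_pow_dvd_of_not_normCondition (hp : Prime p) (hT : Quaternion.normSq T = p)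
    (hPD : NormCondition p (p • B) (D * T))
    (hR : ∀ m, ((p ^ m : R) : ℍ[R]) ∣ D * T * star (p • B) →
      ((p ^ m : R) : ℍ[R]) ∣ star (p • B) * (D * T))
    (hnot : ¬ NormCondition p (B * star T) D) :
    ∃ n, ((p ^ (n + 1) : R) : ℍ[R]) ∣ B * star T ∧ ¬ ((p ^ (n + 2) : R) : ℍ[R]) ∣ p • B ∧
      ((p ^ (2 * n + 2) : R) : ℍ[R]) ∣ D * star (B * star T) := by
  simp only [NormCondition, not_forall] at hnot
  obtain ⟨a, m, hma, ha, -, hm, hνD⟩ := hnot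
  have hDP : ((p ^ (m + 1) : R) : ℍ[R]) ∣ D * T * star (p • B) := by
    rwa [mul_mul_star_smul, pow_succ', coe_mul_dvd_smul_iff hp.ne_zero]
  have hle : ∀ k, ((p ^ k : R) : ℍ[R]) ∣ p • B → 2 * k ≤ m := by
    intro k hk
    by_contra! hlt
    have hν := hPD k (m + 1) hlt hk (hR _ hDP) hDP
    rw [map_mul, hT, pow_succ, mul_dvd_mul_iff_right hp.ne_zero] at hν
    exact hνD hν
  have h1 := hle 1 (by simpa using coe_dvd_smul dvd_rfl B)
  have h2 := hle a (smul_eq_mul_star_mul hT B ▸ ha.mul_right T)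
  obtain ⟨n, rfl⟩ : ∃ n, a = n + 1 := Nat.exists_eq_succ_of_ne_zero (by lia)
  obtain rfl : m = 2 * n + 2 := by lia
  exact ⟨n, ha, fun h => by have := hle _ h; lia, hm⟩

theorem exists_eq_smul_of_not_normCondition (hp : Prime p) (hT : Quaternion.normSq T = p)
    (hPD : NormCondition p (p • B) (D * T))
    (hR : ∀ m, ((p ^ m : R) : ℍ[R]) ∣ D * T * star (p • B) →
      ((p ^ m : R) : ℍ[R]) ∣ star (p • B) * (D * T))
    (hnot : ¬ NormCondition p (B * star T) D) :
    ∃ n, ∃ Q : ℍ[R], B * star T = p ^ (n + 1) • Q ∧ B = p ^ n • (Q * T) ∧ ¬ (p : ℍ[R]) ∣ Q * T ∧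
      ((p ^ (n + 1) : R) : ℍ[R]) ∣ D * star Q ∧
      ((p ^ (n + 1) : R) : ℍ[R]) ∣ star (Q * T) * (D * T) ∧
      p ^ (2 * n + 1) ∣ Quaternion.normSq D := by
  obtain ⟨n, ⟨Q, hQ⟩, hn, hm⟩ := exists_pow_dvd_of_not_normCondition hp hT hPD hR hnot
  have hpow : ∀ k, p ^ k ≠ 0 := fun k => pow_ne_zero k hp.ne_zero
  have hsq : p ^ (2 * n + 2) = p ^ (n + 1) * p ^ (n + 1) := by ring
  rw [Quaternion.coe_mul_eq_smul] at hQ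
  have hP : p • B = p ^ (n + 1) • (Q * T) := by
    rw [smul_eq_mul_star_mul hT, hQ, smul_mul_assoc]
  have hB : B = p ^ n • (Q * T) := by
    rw [pow_succ', mul_smul] at hP
    exact smul_right_injective _ hp.ne_zero hP
  have hDP : ((p ^ (2 * n + 2 + 1) : R) : ℍ[R]) ∣ D * T * star (p • B) := by
    rwa [mul_mul_star_smul, pow_succ', coe_mul_dvd_smul_iff hp.ne_zero]
  have hPD' : ((p ^ (2 * n + 2 + 1) : R) : ℍ[R]) ∣ star (p • B) * (D * T) := hR _ hDP
  refine ⟨n, Q, hQ, hB, fun h => hn ?_, ?_, ?_, ?_⟩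
  · rwa [hP, pow_succ, coe_mul_dvd_smul_iff (hpow _)]
  · rwa [hQ, Quaternion.star_smul, mul_smul_comm, hsq, coe_mul_dvd_smul_iff (hpow _)] at hm
  · rw [hP, Quaternion.star_smul, smul_mul_assoc, pow_succ, hsq, mul_assoc,
      coe_mul_dvd_smul_iff (hpow _)] at hPD'
    exact (coe_dvd_coe_iff.2 (dvd_mul_right _ _)).trans hPD'
  · have hle := coe_dvd_coe_iff.2 (pow_dvd_pow p (Nat.le_succ (2 * n + 2)))
    have hν := hPD (n + 1) (2 * n + 2) le_rfl (by rw [hP]; exact coe_dvd_smul dvd_rfl _)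
      (hle.trans hPD') (hle.trans hDP)
    rwa [map_mul, hT, pow_succ, mul_dvd_mul_iff_right hp.ne_zero] at hν

theorem not_dvd_mul_mul_star (hp : Prime p) (hp2 : ¬ p ∣ 2) (hT : Quaternion.normSq T = p)
    (hδ : star T * δ = δ * T) (hνδ : ¬ p ∣ Quaternion.normSq δ) (hQT : ¬ (p : ℍ[R]) ∣ Q * T) :
    ¬ (p : ℍ[R]) ∣ Q * T * δ * star Q := by
  intro h
  have hδT : (p : ℍ[R]) ∣ Q * T * δ * T := by
    rw [mul_assoc, ← hδ, ← mul_assoc, mul_assoc Q, Quaternion.self_mul_star, hT,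
      Quaternion.mul_coe_eq_smul, smul_mul_assoc]
    exact coe_dvd_smul dvd_rfl _
  have hQTδ : (p : ℍ[R]) ∣ Q * T * δ := by
    rw [← pow_one p] at h hδT ⊢
    exact coe_pow_dvd_of_dvd_mul_of_dvd_mul_star hp hp2 hδT h hQT
  rw [← pow_one p] at hQT
  refine hQT (coe_pow_dvd_of_dvd_smul hp hνδ ?_)
  rw [← Quaternion.mul_coe_eq_smul, ← Quaternion.self_mul_star, ← mul_assoc, pow_one]
  exact hQTδ.mul_right _

/-- If the correction `δ = 0` fails, a nonzero one succeeds: writing `P = p ^ (n + 1) Q`, it brings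
`D Q*` down to exactly `n` factors `p`, while `D D*` still has `2 n + 1` of them. -/
theorem normCondition_of_study_correction (hp : Prime p) (hp2 : ¬ p ∣ 2)
    (hT : Quaternion.normSq T = p) (hδ : star T * δ = δ * T) (hνδ : ¬ p ∣ Quaternion.normSq δ)
    (hQT : ¬ (p : ℍ[R]) ∣ Q * T) {n : ℕ} (hDQ : ((p ^ (n + 1) : R) : ℍ[R]) ∣ D * star Q)
    (hQD : ((p ^ (n + 1) : R) : ℍ[R]) ∣ star (Q * T) * (D * T))
    (hνD : p ^ (2 * n + 1) ∣ Quaternion.normSq D) :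
    NormCondition p (p ^ (n + 1) • Q) (D + p ^ n • (Q * T * δ)) := by
  have hp0 : p ≠ 0 := hp.ne_zero
  intro _ m _ _ _ hm
  have hm' : m ≤ 2 * n + 1 := by
    by_contra! hlt
    have h : ((p ^ (n + 1) * p ^ (n + 1) : R) : ℍ[R]) ∣
        p ^ (n + 1) • ((D + p ^ n • (Q * T * δ)) * star Q) := by
      rw [← mul_smul_comm, ← Quaternion.star_smul, ← pow_add]
      exact (coe_dvd_coe_iff.2 (pow_dvd_pow p (by lia))).trans hm
    rw [coe_mul_dvd_smul_iff (pow_ne_zero _ hp0), add_mul, dvd_add_right hDQ, pow_succ,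
      smul_mul_assoc, coe_mul_dvd_smul_iff (pow_ne_zero _ hp0)] at h
    exact not_dvd_mul_mul_star hp hp2 hT hδ hνδ hQT h
  have hcross : ((p ^ (n + 1) : R) : ℍ[R]) ∣ star (Q * T) * D := by
    refine coe_pow_dvd_of_dvd_mul_of_dvd_mul_star hp hp2 ?_ ?_ hQT
    · rwa [mul_assoc]
    · rw [mul_assoc]
      exact coe_dvd_mul_left hDQ _
  refine (pow_dvd_pow p hm').trans ?_
  rw [normSq_add_eq_star_mul]
  refine dvd_add (dvd_add hνD ?_) (Dvd.dvd.mul_left ?_ _)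
  · rw [Quaternion.normSq_smul, map_mul, map_mul, hT]
    exact ⟨Quaternion.normSq Q * Quaternion.normSq δ, by ring⟩
  · rw [mul_smul_comm, Quaternion.re_smul, smul_eq_mul, two_mul, add_assoc, pow_add]
    refine mul_dvd_mul_left _ (coe_dvd_iff.1 ?_).1
    rw [← mul_assoc, ← star_star (Q * T), ← star_mul]
    exact (coe_dvd_star_iff.2 hcross).mul_right δ

theorem normCondition_or_normCondition_add (hp : Prime p) (hp2 : ¬ p ∣ 2)
    (hT : Quaternion.normSq T = p) (hδ : star T * δ = δ * T) (hνδ : ¬ p ∣ Quaternion.normSq δ)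
    (hPD : NormCondition p (p • B) (D * T))
    (hR : ∀ m, ((p ^ m : R) : ℍ[R]) ∣ D * T * star (p • B) →
      ((p ^ m : R) : ℍ[R]) ∣ star (p • B) * (D * T)) :
    NormCondition p (B * star T) D ∨ NormCondition p (B * star T) (D + B * δ) := by
  rw [or_iff_not_imp_left]
  intro hnot
  obtain ⟨n, Q, hP, hB, hQT, hDQ, hQD, hνD⟩ :=
    exists_eq_smul_of_not_normCondition hp hT hPD hR hnot
  rw [hP, hB, smul_mul_assoc]
  exact normCondition_of_study_correction hp hp2 hT hδ hνδ hQT hDQ hQD hνD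

end LocalStep

section LinearFactors

section CommRing

variable {R : Type*} [CommRing R]

/-- The embedding of the quaternions as constant quaternion polynomials. Quaternion polynomials
are encoded as quaternions over `R[X]`, so that the central real polynomials are their scalars. -/
noncomputable def const (p : ℍ[R]) : ℍ[R[X]] := ⟨C p.re, C p.imI, C p.imJ, C p.imK⟩

@[simp] theorem re_const (p : ℍ[R]) : (const p).re = C p.re := rfl
@[simp] theorem imI_const (p : ℍ[R]) : (const p).imI = C p.imI := rfl
@[simp] theorem imJ_const (p : ℍ[R]) : (const p).imJ = C p.imJ := rfl
@[simp] theorem imK_const (p : ℍ[R]) : (const p).imK = C p.imK := rfl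

theorem const_zero : const (0 : ℍ[R]) = 0 := by ext <;> simp

theorem const_one : const (1 : ℍ[R]) = 1 := by ext <;> simp

theorem const_neg (p : ℍ[R]) : const (-p) = -const p := by ext <;> simp

theorem const_add (p q : ℍ[R]) : const (p + q) = const p + const q := by ext <;> simp

theorem const_mul (p q : ℍ[R]) : const (p * q) = const p * const q := by ext <;> simp

theorem star_const (p : ℍ[R]) : star (const p) = const (star p) := by
  ext <;> simp

theorem normSq_const (p : ℍ[R]) : Quaternion.normSq (const p) = C (Quaternion.normSq p) := by
  simp [Quaternion.normSq_def']

/-- The quaternion polynomial `t - p`. -/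
noncomputable def linFactor (p : ℍ[R]) : ℍ[R[X]] := ((X : R[X]) : ℍ[R[X]]) - const p

theorem star_linFactor (p : ℍ[R]) : star (linFactor p) = linFactor (star p) := by
  ext <;> simp [linFactor]

theorem normSq_linFactor (p : ℍ[R]) :
    Quaternion.normSq (linFactor p) = X ^ 2 - C (2 * p.re) * X + C (Quaternion.normSq p) := by
  simp only [linFactor, Quaternion.normSq_def', Quaternion.re_sub, Quaternion.imI_sub,
    Quaternion.imJ_sub, Quaternion.imK_sub, Quaternion.re_coe, Quaternion.imI_coe,
    Quaternion.imJ_coe, Quaternion.imK_coe, re_const, imI_const, imJ_const, imK_const, C_mul, C_add,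
    C_pow, C_ofNat]
  ring

theorem natDegree_normSq_linFactor [Nontrivial R] (p : ℍ[R]) :
    (Quaternion.normSq (linFactor p)).natDegree = 2 := by
  rw [normSq_linFactor]
  compute_degree!

theorem monic_normSq_linFactor (p : ℍ[R]) : (Quaternion.normSq (linFactor p)).Monic := by
  nontriviality R
  rw [normSq_linFactor]
  monicity!

/-- The condition on `(p, d)` for `t - p - ε d` to be a motion polynomial. -/
def IsStudyPair (p d : ℍ[R]) : Prop := d.re = 0 ∧ (p * d).re = 0

theorem re_linFactor_mul_star_const (p d : ℍ[R]) :
    (linFactor p * star (const d)).re = C d.re * X + C ((p * d).re - 2 * p.re * d.re) := by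
  simp only [linFactor, Quaternion.re_mul, Quaternion.re_star, Quaternion.imI_star,
    Quaternion.imJ_star, Quaternion.imK_star, Quaternion.re_sub, Quaternion.imI_sub,
    Quaternion.imJ_sub, Quaternion.imK_sub, Quaternion.re_coe, Quaternion.imI_coe,
    Quaternion.imJ_coe, Quaternion.imK_coe, re_const, imI_const, imJ_const, imK_const, C_sub,
    C_mul, C_ofNat]
  ring

theorem isStudyPair_iff {p d : ℍ[R]} :
    IsStudyPair p d ↔ (linFactor p * star (const d)).re = 0 := by
  rw [re_linFactor_mul_star_const]
  constructor
  · rintro ⟨hd, hpd⟩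
    simp [hd, hpd]
  · intro h
    have hd : d.re = 0 := by simpa using congrArg (coeff · 1) h
    exact ⟨hd, by simpa [hd] using congrArg (coeff · 0) h⟩

theorem isStudyPair_of_dvd [NoZeroDivisors R] {p d : ℍ[R]} {N : R[X]} (hdeg : 1 < N.natDegree)
    (h : N ∣ (linFactor p * star (const d)).re) : IsStudyPair p d := by
  refine isStudyPair_iff.2 (eq_zero_of_dvd_of_natDegree_lt h ?_)
  rw [re_linFactor_mul_star_const]
  exact natDegree_linear_le.trans_lt hdeg

theorem isStudyPair_zero (p : ℍ[R]) : IsStudyPair p 0 := by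
  simp [IsStudyPair]

theorem IsStudyPair.conj {p d : ℍ[R]} (h : IsStudyPair p d) : IsStudyPair (star p) (star d) := by
  obtain ⟨hd, hpd⟩ := h
  refine ⟨by simpa using hd, ?_⟩
  rw [← star_mul, Quaternion.re_star, Quaternion.re_mul]
  rw [Quaternion.re_mul] at hpd
  linear_combination hpd

theorem IsStudyPair.star_linFactor_mul_const {p d : ℍ[R]} (h : IsStudyPair p d) :
    star (linFactor p) * const d = const d * linFactor p := by
  obtain ⟨hd, hpd⟩ := h
  have hcomm : star p * d = d * p := by
    rw [Quaternion.re_mul, hd] at hpd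
    ext <;> simp [hd] <;> grind
  rw [star_linFactor, linFactor, linFactor, sub_mul, mul_sub, ← const_mul, ← const_mul, hcomm,
    Quaternion.coe_commutes]

theorem exists_isStudyPair_ne_zero [Nontrivial R] (p : ℍ[R]) : ∃ d, d ≠ 0 ∧ IsStudyPair p d := by
  by_cases h : p.imI = 0 ∧ p.imJ = 0
  · refine ⟨⟨0, 1, 0, 0⟩, fun h0 => one_ne_zero (congrArg QuaternionAlgebra.imI h0), rfl, ?_⟩
    exact (Quaternion.re_mul _ _).trans (by simp [h.1])
  · refine ⟨⟨0, p.imJ, -p.imI, 0⟩, fun h0 => h ⟨?_, ?_⟩, rfl, ?_⟩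
    · simpa using congrArg QuaternionAlgebra.imJ h0
    · exact congrArg QuaternionAlgebra.imI h0
    · exact (Quaternion.re_mul _ _).trans (by simp [mul_comm])

theorem exists_eq_mul_add_linear {N : R[X]} (hN : N.Monic) (hdeg : N.natDegree = 2) (f : R[X]) :
    ∃ u a b, f = N * u + (X * C a + C b) := by
  nontriviality R
  have hrem : (f %ₘ N).natDegree ≤ 1 := by
    have := natDegree_modByMonic_lt f hN (by rintro rfl; simp at hdeg)
    lia
  obtain ⟨a, b, hab⟩ := exists_eq_X_add_C_of_natDegree_le_one hrem
  refine ⟨f /ₘ N, a, b, ?_⟩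
  rw [X_mul, ← hab, add_comm, modByMonic_add_div]

theorem exists_eq_smul_add_linear {N : R[X]} (hN : N.Monic) (hdeg : N.natDegree = 2)
    (A : ℍ[R[X]]) : ∃ U r₁ r₀, A = N • U + ((X : R[X]) • const r₁ + const r₀) := by
  obtain ⟨u₁, a₁, b₁, h₁⟩ := exists_eq_mul_add_linear hN hdeg A.re
  obtain ⟨u₂, a₂, b₂, h₂⟩ := exists_eq_mul_add_linear hN hdeg A.imI
  obtain ⟨u₃, a₃, b₃, h₃⟩ := exists_eq_mul_add_linear hN hdeg A.imJ
  obtain ⟨u₄, a₄, b₄, h₄⟩ := exists_eq_mul_add_linear hN hdeg A.imK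
  exact ⟨⟨u₁, u₂, u₃, u₄⟩, ⟨a₁, a₂, a₃, a₄⟩, ⟨b₁, b₂, b₃, b₄⟩,
    Quaternion.ext_iff.2 ⟨h₁, h₂, h₃, h₄⟩⟩

theorem smul_const_add_const (r s : ℍ[R]) (p : ℍ[R]) :
    (X : R[X]) • const r + const s = const r * linFactor p + const (s + r * p) := by
  rw [linFactor, mul_sub, Quaternion.mul_coe_eq_smul, const_add, const_mul]
  abel

theorem smul_add_const_mul_linFactor {N : R[X]} {p : ℍ[R]}
    (hp : Quaternion.normSq (linFactor p) = N) (U : ℍ[R[X]]) (r : ℍ[R]) :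
    N • U + const r * linFactor p = (U * star (linFactor p) + const r) * linFactor p := by
  rw [add_mul, ← smul_eq_mul_star_mul hp]

end CommRing

theorem exists_eq_smul_add_const_mul_linFactor {K : Type*} [Field K] [LinearOrder K]
    [IsStrictOrderedRing K] {N : K[X]} (hN : N.Monic) (hdeg : N.natDegree = 2) {A : ℍ[K[X]]}
    (hNA : ¬ (N : ℍ[K[X]]) ∣ A) (hνA : N ∣ Quaternion.normSq A) :
    ∃ U r p, r ≠ 0 ∧ Quaternion.normSq (linFactor p) = N ∧ A = N • U + const r * linFactor p := by
  obtain ⟨U, r, s, rfl⟩ := exists_eq_smul_add_linear hN hdeg A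
  have hNU : (N : ℍ[K[X]]) ∣ N • U := coe_dvd_smul dvd_rfl U
  rw [dvd_add_right hNU] at hNA
  rw [normSq_add_eq_star_mul, add_right_comm, dvd_add_right] at hνA
  swap
  · refine dvd_add ((Dvd.intro_left _ (by ring)).trans (sq_dvd_normSq hNU)) ?_
    exact ((coe_dvd_iff.1 ((coe_dvd_star_iff.2 hNU).mul_right _)).1).mul_left 2
  by_cases hr : r = 0
  · subst hr
    rw [const_zero, smul_zero, zero_add] at hνA hNA
    have hs : Quaternion.normSq s = 0 := by
      by_contra hne
      have := natDegree_le_of_dvd (normSq_const s ▸ hνA) (C_ne_zero.2 hne)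
      simp [hdeg] at this
    rw [Quaternion.normSq_eq_zero.1 hs, const_zero] at hNA
    exact absurd (dvd_zero _) hNA
  · have hlin : (X : K[X]) • const r + const s = const r * linFactor (-(r⁻¹ * s)) := by
      rw [smul_const_add_const r s (-(r⁻¹ * s)), mul_neg, mul_inv_cancel_left₀ hr, add_neg_cancel,
        const_zero, add_zero]
    rw [hlin, map_mul, normSq_const,
      (isUnit_C.2 (Quaternion.normSq_ne_zero.2 hr).isUnit).dvd_mul_left] at hνA
    refine ⟨U, r, _, hr, ?_, by rw [hlin]⟩
    exact eq_of_monic_of_dvd_of_natDegree_le hN (monic_normSq_linFactor _) hνA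
      (by rw [natDegree_normSq_linFactor, hdeg])

end LinearFactors

section StudyCondition

variable {R : Type*} [CommRing R]

theorem re_mul_mul_star (A Z : ℍ[R]) :
    (A * Z * star A).re = Quaternion.normSq A * Z.re := by
  simp only [Quaternion.normSq_def', Quaternion.re_mul, Quaternion.imI_mul, Quaternion.imJ_mul,
    Quaternion.imK_mul, Quaternion.re_star, Quaternion.imI_star, Quaternion.imJ_star,
    Quaternion.imK_star]
  ring

theorem mul_mul_star_sub (P D T δ : ℍ[R]) : P * T * star (D * T - P * δ) =
    Quaternion.normSq T • (P * star D) - P * (T * star δ) * star P := by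
  rw [← Quaternion.mul_coe_eq_smul, mul_assoc P (star D), ← Quaternion.coe_commutes,
    ← Quaternion.self_mul_star, star_sub, star_mul, star_mul]
  noncomm_ring

theorem re_mul_star_eq_zero_of_mul_right [IsDomain R] {P D T δ : ℍ[R]}
    (hT : Quaternion.normSq T ≠ 0) (hδ : (T * star δ).re = 0)
    (h : (P * T * star (D * T - P * δ)).re = 0) : (P * star D).re = 0 := by
  rw [mul_mul_star_sub, Quaternion.re_sub, re_mul_mul_star, hδ, mul_zero, sub_zero,
    Quaternion.re_smul, smul_eq_mul] at h
  exact (mul_eq_zero.1 h).resolve_left hT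

theorem normSq_dvd_of_re_mul_star_eq_zero {U V T r δ : ℍ[R]}
    (h : ((U * star T + r) * T * star (V * T - r * δ)).re = 0) :
    Quaternion.normSq T ∣ Quaternion.normSq r * (T * star δ).re := by
  have hsplit := calc (U * star T + r) * T * star (V * T - r * δ)
    _ = (U * star T + r) * (T * star T) * star V - U * (star T * T) * star δ * star r -
          r * (T * star δ) * star r := by
      rw [star_sub, star_mul, star_mul]
      noncomm_ring
    _ = Quaternion.normSq T • ((U * star T + r) * star V - U * star δ * star r) -
          r * (T * star δ) * star r := by
      rw [Quaternion.self_mul_star, Quaternion.star_mul_self, Quaternion.mul_coe_eq_smul,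
        Quaternion.mul_coe_eq_smul, smul_mul_assoc, smul_mul_assoc, smul_mul_assoc, smul_sub]
  rw [hsplit, Quaternion.re_sub, Quaternion.re_smul, re_mul_mul_star, sub_eq_zero] at h
  exact ⟨_, h.symm⟩

theorem mul_star_add_mul_star (A B : ℍ[R]) :
    A * star B + B * star A = ((2 * (A * star B).re : R) : ℍ[R]) := by
  rw [← Quaternion.self_add_star', star_mul, star_star]

theorem eq_star_mul_star_of_star_eq_mul {A B T : ℍ[R]} (h : star A = B * T) :
    A = star T * star B := by
  rw [← star_mul, ← h, star_star]

theorem eq_star_mul_star_sub_of_star_eq_mul_sub {A B E T δ : ℍ[R]}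
    (h : star A = B * T - E * δ) : A = star T * star B - star δ * star E := by
  rw [← star_mul, ← star_mul, ← star_sub, ← h, star_star]

theorem mul_sub_mul_eq {T δ : ℍ[R]} (hδ : star T * δ = δ * T) (U V r : ℍ[R]) :
    V * T - r * δ = (V + U * δ) * T - (U * star T + r) * δ := by
  rw [add_mul, add_mul, mul_assoc U, mul_assoc U, hδ]
  abel

end StudyCondition

section Admissible

theorem X_sub_C_dvd_of_dvd_normSq {K : Type*} [Field K] [LinearOrder K] [IsStrictOrderedRing K]
    {A : ℍ[K[X]]} {a : K} (h : X - C a ∣ Quaternion.normSq A) :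
    ((X - C a : K[X]) : ℍ[K[X]]) ∣ A := by
  simp only [coe_dvd_iff, Quaternion.normSq_def', dvd_iff_isRoot, IsRoot.def, eval_add,
    eval_pow] at h ⊢
  refine ⟨?_, ?_, ?_, ?_⟩ <;> nlinarith

variable {P D : ℍ[ℝ[X]]}

/-- The invariant of the factorization procedure: `P + ε D` satisfies the Study condition, is
bounded and reduced, and fulfils `NormCondition` at every irreducible real polynomial. -/
structure Admissible (P D : ℍ[ℝ[X]]) : Prop where
  study : (P * star D).re = 0
  bounded : ∀ a : ℝ, ¬ ((X - C a : ℝ[X]) : ℍ[ℝ[X]]) ∣ P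
  reduced : ∀ F : ℝ[X], F.Monic → Irreducible F → (F : ℍ[ℝ[X]]) ∣ P → ¬ (F : ℍ[ℝ[X]]) ∣ D
  norm : ∀ F : ℝ[X], F.Monic → Irreducible F → NormCondition F P D

namespace Admissible

theorem conj (h : Admissible P D) : Admissible (star P) (star D) where
  study := by
    have hstudy := h.study
    simp only [Quaternion.re_mul, Quaternion.re_star, Quaternion.imI_star, Quaternion.imJ_star,
      Quaternion.imK_star] at hstudy ⊢
    linear_combination hstudy
  bounded a ha := h.bounded a (coe_dvd_star_iff.1 ha)
  reduced F hm hF hP hD := h.reduced F hm hF (coe_dvd_star_iff.1 hP) (coe_dvd_star_iff.1 hD)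
  norm F hm hF := (h.norm F hm hF).conj

theorem of_mul_right {p d : ℍ[ℝ]} (hpd : IsStudyPair p d)
    (hirr : Irreducible (Quaternion.normSq (linFactor p)))
    (hnorm : NormCondition (Quaternion.normSq (linFactor p)) P D)
    (h : Admissible (P * linFactor p) (D * linFactor p - P * const d)) : Admissible P D where
  study := re_mul_star_eq_zero_of_mul_right hirr.ne_zero (isStudyPair_iff.1 hpd) h.study
  bounded a ha := h.bounded a (ha.mul_right _)
  reduced F hm hF hP hD :=
    h.reduced F hm hF (hP.mul_right _) (dvd_sub (hD.mul_right _) (hP.mul_right _))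
  norm F hm hF := by
    by_cases hFN : F ∣ Quaternion.normSq (linFactor p)
    · obtain rfl := eq_of_monic_of_associated hm (monic_normSq_linFactor p)
        (hF.associated_of_dvd hirr hFN)
      exact hnorm
    · exact (h.norm F hm hF).of_mul_right hF.prime hFN

theorem natDegree_eq_two (h : Admissible P D) {N : ℝ[X]} (hm : N.Monic) (hN : Irreducible N)
    (hNP : N ∣ Quaternion.normSq P) : N.natDegree = 2 := by
  have hle := hN.natDegree_le_two
  have hpos := hN.natDegree_pos
  have hne : N.natDegree ≠ 1 := by
    intro h1
    have hX : N = X - C (-N.coeff 0) := by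
      rw [C_neg, sub_neg_eq_add]
      exact hm.eq_X_add_C h1
    exact h.bounded _ (X_sub_C_dvd_of_dvd_normSq (hX ▸ hNP))
  lia

end Admissible

/-- `P + ε D` is the product of an admissible `P' + ε D'` and a linear motion polynomial
`t - p - ε d` on the right. -/
def SplitsRight (P D : ℍ[ℝ[X]]) : Prop :=
  ∃ P' D' p d, Admissible P' D' ∧ IsStudyPair p d ∧
    P = P' * linFactor p ∧ D = D' * linFactor p - P' * const d

/-- `P + ε D` is the product of an admissible `P' + ε D'` and a linear motion polynomial
`t - p - ε d` on the left. -/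
def SplitsLeft (P D : ℍ[ℝ[X]]) : Prop :=
  ∃ P' D' p d, Admissible P' D' ∧ IsStudyPair p d ∧
    P = linFactor p * P' ∧ D = linFactor p * D' - const d * P'

theorem SplitsRight.conj (h : SplitsRight (star P) (star D)) : SplitsLeft P D := by
  obtain ⟨P', D', p, d, hadm, hpd, hP, hD⟩ := h
  refine ⟨star P', star D', star p, star d, hadm.conj, hpd.conj, ?_, ?_⟩
  · rw [← star_linFactor]
    exact eq_star_mul_star_of_star_eq_mul hP
  · rw [← star_linFactor, ← star_const]
    exact eq_star_mul_star_sub_of_star_eq_mul_sub hD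

theorem Admissible.splitsRight {P' D' : ℍ[ℝ[X]]} {p d : ℍ[ℝ]} (h : Admissible P D)
    (hirr : Irreducible (Quaternion.normSq (linFactor p))) (hpd : IsStudyPair p d)
    (hP : P = P' * linFactor p) (hD : D = D' * linFactor p - P' * const d)
    (hnorm : NormCondition (Quaternion.normSq (linFactor p)) P' D') : SplitsRight P D := by
  subst hP hD
  exact ⟨P', D', p, d, .of_mul_right hpd hirr hnorm h, hpd, rfl, rfl⟩

theorem Admissible.splitsRight_of_dvd {N : ℝ[X]} (h : Admissible P D) (hm : N.Monic)
    (hN : Irreducible N) (hNP : (N : ℍ[ℝ[X]]) ∣ P)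
    (hR : ∀ m, ((N ^ m : ℝ[X]) : ℍ[ℝ[X]]) ∣ D * star P →
      ((N ^ m : ℝ[X]) : ℍ[ℝ[X]]) ∣ star P * D) : SplitsRight P D := by
  have hN2 : ¬ N ∣ 2 := fun h2 => hN.not_isUnit <|
    isUnit_of_dvd_unit h2 (isUnit_C.2 (isUnit_iff_ne_zero.2 (two_ne_zero (α := ℝ))))
  have hdeg := h.natDegree_eq_two hm hN
    ((Dvd.intro_left _ (sq N).symm).trans (sq_dvd_normSq hNP))
  have hνD : N ∣ Quaternion.normSq D := by
    have h1 := h.norm N hm hN 1 1 (by norm_num)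
    rw [pow_one] at h1
    exact h1 hNP ((coe_dvd_star_iff.2 hNP).mul_right D)
      (coe_dvd_mul_left (coe_dvd_star_iff.2 hNP) D)
  obtain ⟨U, r, p, -, hp, hD⟩ :=
    exists_eq_smul_add_const_mul_linFactor hm hdeg (h.reduced N hm hN hNP) hνD
  rw [smul_add_const_mul_linFactor hp] at hD
  set D₁ := U * star (linFactor p) + const r
  obtain ⟨B, hB⟩ := hNP
  rw [Quaternion.coe_mul_eq_smul] at hB
  obtain ⟨d, hd, hpd⟩ := exists_isStudyPair_ne_zero p
  have hP : P = B * star (linFactor p) * linFactor p := by rw [hB, smul_eq_mul_star_mul hp]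
  have hνd : ¬ N ∣ Quaternion.normSq (const d) := fun hdvd => hN.not_isUnit <|
    isUnit_of_dvd_unit hdvd
      (normSq_const d ▸ isUnit_C.2 (Quaternion.normSq_ne_zero.2 hd).isUnit)
  have hcases := normCondition_or_normCondition_add (B := B) (D := D₁) hN.prime hN2 hp
    hpd.star_linFactor_mul_const hνd (by rw [← hB, ← hD]; exact h.norm N hm hN)
    (by rwa [← hB, ← hD])
  subst hp
  rcases hcases with hnorm | hnorm
  · have hD0 : D = D₁ * linFactor p - B * star (linFactor p) * const 0 := by
      rw [const_zero, mul_zero, sub_zero, hD]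
    exact h.splitsRight hN (isStudyPair_zero p) hP hD0 hnorm
  · refine h.splitsRight hN hpd hP ?_ hnorm
    rw [hD, mul_assoc B, hpd.star_linFactor_mul_const]
    noncomm_ring

theorem Admissible.splitsRight_of_not_dvd {N : ℝ[X]} (h : Admissible P D) (hm : N.Monic)
    (hN : Irreducible N) (hνP : N ∣ Quaternion.normSq P) (hNP : ¬ (N : ℍ[ℝ[X]]) ∣ P) :
    SplitsRight P D := by
  have hdeg := h.natDegree_eq_two hm hN hνP
  obtain ⟨U, r, p, hr, hp, hP⟩ := exists_eq_smul_add_const_mul_linFactor hm hdeg hNP hνP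
  obtain ⟨V, s₁, s₀, hD⟩ := exists_eq_smul_add_linear hm hdeg D
  rw [smul_add_const_mul_linFactor hp] at hP
  obtain ⟨d, hd⟩ : ∃ d, s₀ + s₁ * p = -(r * d) :=
    ⟨-(r⁻¹ * (s₀ + s₁ * p)), by rw [mul_neg, mul_inv_cancel_left₀ hr, neg_neg]⟩
  rw [smul_const_add_const s₁ s₀ p, hd, const_neg, const_mul, ← add_assoc,
    smul_add_const_mul_linFactor hp, ← sub_eq_add_neg] at hD
  have hpd : IsStudyPair p d := by
    have hdvd := h.study
    rw [hP, hD] at hdvd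
    replace hdvd := normSq_dvd_of_re_mul_star_eq_zero hdvd
    rw [normSq_const, (isUnit_C.2 (Quaternion.normSq_ne_zero.2 hr).isUnit).dvd_mul_left] at hdvd
    exact isStudyPair_of_dvd (by rw [natDegree_normSq_linFactor]; norm_num) hdvd
  subst hp
  refine h.splitsRight hN hpd hP
    (hD.trans (mul_sub_mul_eq hpd.star_linFactor_mul_const U _ _)) (.of_not_dvd fun hdvd => hNP ?_)
  rw [hP]
  exact hdvd.mul_right _

theorem Admissible.splitsRight_or_splitsLeft (h : Admissible P D)
    (hP : ¬ IsUnit (Quaternion.normSq P)) : SplitsRight P D ∨ SplitsLeft P D := by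
  obtain ⟨N, hm, hN, hνP⟩ := exists_monic_irreducible_factor _ hP
  by_cases hNP : (N : ℍ[ℝ[X]]) ∣ P
  · refine (forall_coe_pow_dvd_imp_or N (D * star P) (star P * D)).imp
      (h.splitsRight_of_dvd hm hN hNP) fun hL =>
        (h.conj.splitsRight_of_dvd hm hN (coe_dvd_star_iff.2 hNP) fun m hPD => ?_).conj
    exact coe_dvd_star_mul_star_iff.2 (hL m (coe_dvd_star_mul_star_iff.1 hPD))
  · exact .inl (h.splitsRight_of_not_dvd hm hN hνP hNP)

end Admissible

section Components

variable {R : Type*} [CommRing R]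

/-- `const` as a ring homomorphism. -/
noncomputable def constHom : ℍ[R] →+* ℍ[R[X]] where
  toFun := const
  map_zero' := const_zero
  map_one' := const_one
  map_add' := const_add
  map_mul' := const_mul

/-- The passage from a polynomial with quaternion coefficients to the quaternion of its four
component polynomials. -/
noncomputable def components : ℍ[R][X] →+* ℍ[R[X]] :=
  eval₂RingHom' constHom ((X : R[X]) : ℍ[R[X]]) fun _ => (Quaternion.coe_commutes _ _).symm

theorem components_C (p : ℍ[R]) : components (C p) = const p :=
  eval₂_C _ _

theorem components_X : components (X : ℍ[R][X]) = ((X : R[X]) : ℍ[R[X]]) :=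
  eval₂_X _ _

theorem components_monomial (n : ℕ) (p : ℍ[R]) :
    components (monomial n p) = (X ^ n : R[X]) • const p := by
  rw [← Quaternion.mul_coe_eq_smul, Quaternion.coe_pow]
  exact eval₂_monomial _ _

theorem coeff_components (A : ℍ[R][X]) (n : ℕ) :
    (components A).re.coeff n = (A.coeff n).re ∧ (components A).imI.coeff n = (A.coeff n).imI ∧
      (components A).imJ.coeff n = (A.coeff n).imJ ∧
        (components A).imK.coeff n = (A.coeff n).imK := by
  induction A using Polynomial.induction_on' with
  | add A B hA hB => simp [hA, hB]
  | monomial k p =>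
    rw [components_monomial, coeff_monomial]
    split_ifs with h
    · simp [h]
    · simp [coeff_X_pow, Ne.symm h]

theorem components_injective : Function.Injective (components (R := R)) := by
  intro A B h
  ext n
  all_goals simp only [← (coeff_components _ n).1, ← (coeff_components _ n).2.1,
    ← (coeff_components _ n).2.2.1, ← (coeff_components _ n).2.2.2, h]

theorem components_map_algebraMap (f : R[X]) :
    components (f.map (algebraMap R ℍ[R])) = (f : ℍ[R[X]]) := by
  ext n <;> simp [coeff_components]

theorem components_surjective : Function.Surjective (components (R := R)) := by
  intro A
  obtain ⟨i, hi⟩ : ∃ i : ℍ[R], i.re = 0 ∧ i.imI = 1 ∧ i.imJ = 0 ∧ i.imK = 0 :=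
    ⟨⟨0, 1, 0, 0⟩, rfl, rfl, rfl, rfl⟩
  obtain ⟨j, hj⟩ : ∃ j : ℍ[R], j.re = 0 ∧ j.imI = 0 ∧ j.imJ = 1 ∧ j.imK = 0 :=
    ⟨⟨0, 0, 1, 0⟩, rfl, rfl, rfl, rfl⟩
  obtain ⟨k, hk⟩ : ∃ k : ℍ[R], k.re = 0 ∧ k.imI = 0 ∧ k.imJ = 0 ∧ k.imK = 1 :=
    ⟨⟨0, 0, 0, 1⟩, rfl, rfl, rfl, rfl⟩
  refine ⟨A.re.map (algebraMap R ℍ[R]) + A.imI.map (algebraMap R ℍ[R]) * C i +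
    A.imJ.map (algebraMap R ℍ[R]) * C j + A.imK.map (algebraMap R ℍ[R]) * C k, ?_⟩
  simp only [map_add, map_mul, components_map_algebraMap, components_C]
  ext <;> simp [hi, hj, hk]

theorem components_X_sub_C (p : ℍ[R]) : components (X - C p) = linFactor p := by
  rw [map_sub, components_X, components_C, linFactor]

theorem coeff_cstar {S : Type*} [Semiring S] [Star S] (h0 : star (0 : S) = 0) (A : S[X]) (n : ℕ) :
    (cstar A).coeff n = star (A.coeff n) := by
  simp only [cstar, sum_def, finsetSum_coeff, coeff_C_mul, coeff_X_pow, mul_ite, mul_one, mul_zero,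
    Finset.sum_ite_eq]
  split_ifs with h
  · rfl
  · rw [notMem_support_iff.1 h, h0]

theorem components_cstar (A : ℍ[R][X]) : components (cstar A) = star (components A) := by
  ext n <;> simp [coeff_components, coeff_cstar]

end Components

section DualPolynomials

variable {P D P' D' : Hq[X]} {p d : Hq}

theorem rDvdQ_iff {f : ℝ[X]} {A : Hq[X]} :
    RDvdQ f A ↔ (f : ℍ[ℝ[X]]) ∣ components A := by
  constructor
  · rintro ⟨B, rfl⟩
    rw [map_mul, qPoly, components_map_algebraMap]
    exact dvd_mul_right _ _
  · rintro ⟨B, hB⟩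
    obtain ⟨B, rfl⟩ := components_surjective B
    rw [← components_map_algebraMap, ← map_mul] at hB
    exact ⟨B, components_injective hB⟩

theorem coeff_mp (P D : Hq[X]) (n : ℕ) :
    (mp P D).coeff n = inl (P.coeff n) + inr (D.coeff n) := by
  simp only [mp, dhQ, coeff_add, coeff_C_mul, coeff_map]
  ext <;> simp

theorem mp_inj : mp P D = mp P' D' ↔ P = P' ∧ D = D' := by
  refine ⟨fun h => ⟨?_, ?_⟩, by rintro ⟨rfl, rfl⟩; rfl⟩ <;> ext1 n
  · simpa [coeff_mp] using congrArg (fst <| coeff · n) h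
  · simpa [coeff_mp] using congrArg (snd <| coeff · n) h

theorem primal_mp (P D : Hq[X]) : primal (mp P D) = P := by
  ext1 n
  simp [primal, coeff_mp]

theorem dPoly_eq_mp (f : ℝ[X]) : dPoly f = mp (qPoly f) 0 := by
  simp [dPoly, mp, dhQ]

theorem mp_mul_mp (P D P' D' : Hq[X]) :
    mp P D * mp P' D' = mp (P * P') (P * D' + D * P') := by
  have hcomm (A : Hq[X]) : dhQ A * C ε = C ε * dhQ A := by
    ext1 n
    simp only [dhQ, coeff_C_mul, coeff_mul_C, coeff_map]
    ext <;> simp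
  have hsq : (C ε * C ε : DHq[X]) = 0 := by rw [← C_mul, eps_mul_eps, C_0]
  have hε : C ε * dhQ D * (C ε * dhQ D') = 0 := by
    rw [mul_assoc, ← mul_assoc (dhQ D), hcomm, mul_assoc, ← mul_assoc, hsq, zero_mul]
  have hmul (A B : Hq[X]) : dhQ (A * B) = dhQ A * dhQ B := Polynomial.map_mul _
  have hadd (A B : Hq[X]) : dhQ (A + B) = dhQ A + dhQ B := Polynomial.map_add _
  rw [mp, mp, mp, add_mul, mul_add, mul_add, hε, hadd, hmul, hmul, hmul, mul_add,
    ← mul_assoc (dhQ P), hcomm]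
  simp only [mul_assoc]
  abel

theorem star_inl_add_inr (a b : Hq) :
    star (inl a + inr b : DHq) = inl (star a) + inr (star b) := by
  change inl (star (inl a + inr b : DHq).fst) + inr (star (inl a + inr b : DHq).snd) = _
  simp

theorem cstar_mp (P D : Hq[X]) : cstar (mp P D) = mp (cstar P) (cstar D) := by
  have h0 : star (0 : DHq) = 0 := by simpa using star_inl_add_inr 0 0
  ext1 n
  rw [coeff_cstar h0, coeff_mp, coeff_mp, coeff_cstar (star_zero _), coeff_cstar (star_zero _),
    star_inl_add_inr]

theorem mul_cstar_self (P : Hq[X]) :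
    P * cstar P = qPoly (Quaternion.normSq (components P)) := by
  apply components_injective
  rw [map_mul, components_cstar, Quaternion.self_mul_star, qPoly, components_map_algebraMap]

theorem mul_cstar_add_mul_cstar (P D : Hq[X]) :
    P * cstar D + D * cstar P = qPoly (2 * (components P * star (components D)).re) := by
  apply components_injective
  rw [qPoly, components_map_algebraMap, map_add, map_mul, map_mul, components_cstar,
    components_cstar, mul_star_add_mul_star]

theorem qPoly_injective : Function.Injective qPoly :=
  map_injective _ (algebraMap ℝ Hq).injective

theorem qPoly_eq_zero {f : ℝ[X]} : qPoly f = 0 ↔ f = 0 :=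
  Polynomial.map_eq_zero_iff (algebraMap ℝ Hq).injective

theorem cstar_eq_zero : cstar P = 0 ↔ P = 0 := by
  simp only [Polynomial.ext_iff, coeff_cstar (star_zero Hq), coeff_zero, star_eq_zero]

theorem normSq_components_eq_zero : Quaternion.normSq (components P) = 0 ↔ P = 0 := by
  rw [← qPoly_eq_zero, ← mul_cstar_self, mul_eq_zero, cstar_eq_zero, or_self]

theorem mp_mul_cstar_mp (P D : Hq[X]) : mp P D * cstar (mp P D) =
    mp (qPoly (Quaternion.normSq (components P)))
      (qPoly (2 * (components P * star (components D)).re)) := by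
  rw [cstar_mp, mp_mul_mp, mul_cstar_self, mul_cstar_add_mul_cstar]

theorem isMotion_mp_iff : IsMotion (mp P D) ↔
    P ≠ 0 ∧ (components P * star (components D)).re = 0 := by
  simp only [IsMotion, mp_mul_cstar_mp, dPoly_eq_mp, mp_inj, qPoly_injective.eq_iff, qPoly_eq_zero]
  constructor
  · rintro ⟨_, hf, rfl, h⟩
    exact ⟨normSq_components_eq_zero.not.1 hf, (mul_eq_zero.1 h).resolve_left two_ne_zero⟩
  · rintro ⟨hP, h⟩
    exact ⟨_, normSq_components_eq_zero.not.2 hP, rfl, by rw [h, mul_zero]⟩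

theorem not_isUnit_normSq_components (hm : (mp P D).Monic) (hdeg : (mp P D).natDegree ≠ 0) :
    ¬ IsUnit (Quaternion.normSq (components P)) := by
  intro hu
  have hlead : P.coeff (mp P D).natDegree = 1 := by
    have h := congrArg fst hm.coeff_natDegree
    rw [coeff_mp] at h
    simpa using h
  have hne : P.coeff (mp P D).natDegree ≠ 0 := hlead ▸ one_ne_zero
  have hP : P ≠ 0 := by
    rintro rfl
    simp at hne
  have hsum : P.natDegree + (cstar P).natDegree = 0 := by
    rw [← natDegree_mul hP (cstar_eq_zero.not.2 hP), mul_cstar_self]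
    exact Nat.le_zero.1 (natDegree_map_le.trans (natDegree_eq_zero_of_isUnit hu).le)
  have := le_natDegree_of_ne_zero hne
  lia

theorem lin_eq_X_sub_C (p d : Hq) : lin p d = X - C (inl p + inr d) := by
  ext1 n
  rw [lin, coeff_mp]
  simp only [coeff_sub, coeff_X, coeff_C, coeff_neg]
  split_ifs <;> ext <;> simp

theorem isMotion_lin (h : IsStudyPair p d) : IsMotion (lin p d) := by
  rw [lin, isMotion_mp_iff, components_X_sub_C, ← C_neg, components_C, ← isStudyPair_iff]
  exact ⟨X_sub_C_ne_zero p, by rw [Quaternion.re_neg, h.1, neg_zero],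
    by rw [mul_neg, Quaternion.re_neg, h.2, neg_zero]⟩

theorem mp_mul_lin (P D : Hq[X]) (p d : Hq) :
    mp P D * lin p d = mp (P * (X - C p)) (D * (X - C p) - P * C d) := by
  rw [lin, mp_mul_mp, mul_neg, neg_add_eq_sub]

theorem lin_mul_mp (P D : Hq[X]) (p d : Hq) :
    lin p d * mp P D = mp ((X - C p) * P) ((X - C p) * D - C d * P) := by
  rw [lin, mp_mul_mp, neg_mul, ← sub_eq_add_neg]

end DualPolynomials

section Factorization

variable {P D : Hq[X]}

theorem hasLinFact_one : HasLinFact 1 := ⟨[], by simp, by simp⟩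

theorem hasLinFact_lin {p d : Hq} (h : IsStudyPair p d) : HasLinFact (lin p d) := by
  refine ⟨[inl p + inr d], ?_, ?_⟩
  · intro x hx
    rw [List.mem_singleton.1 hx, ← lin_eq_X_sub_C]
    exact isMotion_lin h
  · rw [List.map_singleton, List.prod_singleton, lin_eq_X_sub_C]

theorem hasLinFact_mul {M N : DHq[X]} (hM : HasLinFact M) (hN : HasLinFact N) :
    HasLinFact (M * N) := by
  obtain ⟨L, hL, rfl⟩ := hM
  obtain ⟨L', hL', rfl⟩ := hN
  refine ⟨L ++ L', fun h hmem => (List.mem_append.1 hmem).elim (hL h) (hL' h), ?_⟩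
  rw [List.map_append, List.prod_append]

theorem mp_eq_mul_lin_of_splitsRight (h : SplitsRight (components P) (components D)) :
    ∃ P' D' p d, Admissible (components P') (components D') ∧ IsStudyPair p d ∧
      mp P D = mp P' D' * lin p d := by
  obtain ⟨P', D', p, d, hadm, hpd, hP, hD⟩ := h
  obtain ⟨P', rfl⟩ := components_surjective P'
  obtain ⟨D', rfl⟩ := components_surjective D'
  rw [← components_X_sub_C, ← map_mul] at hP hD
  rw [← components_C, ← map_mul, ← map_sub] at hD
  refine ⟨P', D', p, d, hadm, hpd, ?_⟩
  rw [mp_mul_lin, components_injective hP, components_injective hD]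

theorem mp_eq_lin_mul_of_splitsLeft (h : SplitsLeft (components P) (components D)) :
    ∃ P' D' p d, Admissible (components P') (components D') ∧ IsStudyPair p d ∧
      mp P D = lin p d * mp P' D' := by
  obtain ⟨P', D', p, d, hadm, hpd, hP, hD⟩ := h
  obtain ⟨P', rfl⟩ := components_surjective P'
  obtain ⟨D', rfl⟩ := components_surjective D'
  rw [← components_X_sub_C, ← map_mul] at hP hD
  rw [← components_C, ← map_mul, ← map_sub] at hD
  refine ⟨P', D', p, d, hadm, hpd, ?_⟩
  rw [lin_mul_mp, components_injective hP, components_injective hD]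

theorem monic_lin (p d : Hq) : (lin p d).Monic :=
  lin_eq_X_sub_C p d ▸ monic_X_sub_C _

theorem natDegree_lin (p d : Hq) : (lin p d).natDegree = 1 := by
  rw [lin_eq_X_sub_C, natDegree_X_sub_C]

theorem hasLinFact_of_admissible (h : Admissible (components P) (components D))
    (hm : (mp P D).Monic) : HasLinFact (mp P D) := by
  induction hn : (mp P D).natDegree generalizing P D with
  | zero =>
    rw [eq_one_of_monic_natDegree_zero hm hn]
    exact hasLinFact_one
  | succ n ih =>
    have hu := not_isUnit_normSq_components hm (by lia)
    rcases h.splitsRight_or_splitsLeft hu with hR | hL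
    · obtain ⟨P', D', p, d, h', hpd, heq⟩ := mp_eq_mul_lin_of_splitsRight hR
      rw [heq] at hm hn ⊢
      have hm' := (monic_lin p d).of_mul_monic_right hm
      rw [hm'.natDegree_mul (monic_lin p d), natDegree_lin] at hn
      exact hasLinFact_mul (ih h' hm' (by lia)) (hasLinFact_lin hpd)
    · obtain ⟨P', D', p, d, h', hpd, heq⟩ := mp_eq_lin_mul_of_splitsLeft hL
      rw [heq] at hm hn ⊢
      have hm' := (monic_lin p d).of_mul_monic_left hm
      rw [(monic_lin p d).natDegree_mul hm', natDegree_lin] at hn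
      exact hasLinFact_mul (hasLinFact_lin hpd) (ih h' hm' (by lia))

end Factorization

section NormConditionSMul

variable {R : Type*} [CommRing R] [IsDomain R] {p s c : R} {Q D : ℍ[R]} {a b k : ℕ}

theorem coe_pow_dvd_of_dvd_pow_mul_smul (hp : Prime p) (hs : ¬ p ∣ s)
    (h : ((p ^ (k + b) : R) : ℍ[R]) ∣ (p ^ k * s) • Q) : ((p ^ b : R) : ℍ[R]) ∣ Q := by
  rw [pow_add, mul_smul, coe_mul_dvd_smul_iff (pow_ne_zero k hp.ne_zero)] at h
  exact coe_pow_dvd_of_dvd_smul hp hs h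

theorem le_of_coe_pow_dvd_pow_mul_smul (hp : Prime p) (hs : ¬ p ∣ s) (hQ : ¬ (p : ℍ[R]) ∣ Q)
    (h : ((p ^ a : R) : ℍ[R]) ∣ (p ^ k * s) • Q) : a ≤ k := by
  by_contra! hka
  have hpQ : ((p ^ 1 : R) : ℍ[R]) ∣ Q := coe_pow_dvd_of_dvd_pow_mul_smul hp hs
    ((coe_dvd_coe_iff.2 (pow_dvd_pow p hka)).trans h)
  exact hQ (by rwa [pow_one] at hpQ)

theorem normCondition_smul (hp : Prime p) (hfin : FiniteMultiplicity p c) (hQ : ¬ (p : ℍ[R]) ∣ Q)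
    (h : ∀ a b, p ^ a ∣ c → p ^ b ∣ c → ((p ^ b : R) : ℍ[R]) ∣ star Q * D →
      ((p ^ b : R) : ℍ[R]) ∣ D * star Q → p ^ (a + b) ∣ Quaternion.normSq D) :
    NormCondition p (c • Q) D := by
  obtain ⟨s, hc, hs⟩ := hfin.exists_eq_pow_mul_and_not_dvd
  generalize multiplicity p c = k at hc
  subst hc
  intro a m hm ha hPD hDP
  have hak : a ≤ k := le_of_coe_pow_dvd_pow_mul_smul hp hs hQ ha
  rcases le_total m k with hmk | hkm
  · exact h m 0 ((pow_dvd_pow p hmk).mul_right s) (by simp) (by simp) (by simp)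
  · obtain ⟨b, rfl⟩ := Nat.exists_eq_add_of_le hkm
    have hbk : b ≤ k := by lia
    rw [Quaternion.star_smul, smul_mul_assoc] at hPD
    rw [Quaternion.star_smul, mul_smul_comm] at hDP
    exact h k b (dvd_mul_right _ s) ((pow_dvd_pow p hbk).mul_right s)
      (coe_pow_dvd_of_dvd_pow_mul_smul hp hs hPD) (coe_pow_dvd_of_dvd_pow_mul_smul hp hs hDP)

end NormConditionSMul

section Reduction

theorem not_coe_dvd_components_of_reducedQ {Q : Hq[X]} (hQ : ReducedQ Q) {F : ℝ[X]} (hm : F.Monic)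
    (hF : Irreducible F) : ¬ (F : ℍ[ℝ[X]]) ∣ components Q := fun h =>
  hF.ne_one (hQ F hm (rDvdQ_iff.2 h))

theorem rDvdD_mp {f : ℝ[X]} {P D : Hq[X]} (hP : RDvdQ f P) (hD : RDvdQ f D) :
    RDvdD f (mp P D) := by
  obtain ⟨P, rfl⟩ := hP
  obtain ⟨D, rfl⟩ := hD
  exact ⟨mp P D, by rw [dPoly_eq_mp, mp_mul_mp, zero_mul, add_zero]⟩

theorem not_coe_dvd_components_of_reducedD {P D : Hq[X]} (h : ReducedD (mp P D)) {F : ℝ[X]}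
    (hm : F.Monic) (hF : Irreducible F) (hP : (F : ℍ[ℝ[X]]) ∣ components P) :
    ¬ (F : ℍ[ℝ[X]]) ∣ components D := fun hD =>
  hF.ne_one (h F hm (rDvdD_mp (rDvdQ_iff.2 hP) (rDvdQ_iff.2 hD)))

theorem components_qPoly_mul (c : ℝ[X]) (Q : Hq[X]) :
    components (qPoly c * Q) = c • components Q := by
  rw [map_mul, qPoly, components_map_algebraMap, Quaternion.coe_mul_eq_smul]

theorem normCondition_components {c g F : ℝ[X]} {Q D : Hq[X]} (hm : F.Monic) (hF : Irreducible F)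
    (hc : c ≠ 0) (hQ : ReducedQ Q) (hg : IsMrpf3 g c (cstar Q * D) (D * cstar Q))
    (hcg : RDvdQ (c * g) (D * cstar D)) :
    NormCondition F (components (qPoly c * Q)) (components D) := by
  rw [components_qPoly_mul]
  refine normCondition_smul hF.prime (FiniteMultiplicity.of_not_isUnit hF.not_isUnit hc)
    (not_coe_dvd_components_of_reducedQ hQ hm hF) fun a b ha hb hQD hDQ => ?_
  have hbg : F ^ b ∣ g := hg.2.2.2.2 _ (hm.pow b) hb
    (rDvdQ_iff.2 (by rwa [map_mul, components_cstar]))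
    (rDvdQ_iff.2 (by rwa [map_mul, components_cstar]))
  have hnorm : c * g ∣ Quaternion.normSq (components D) := by
    rwa [rDvdQ_iff, map_mul, components_cstar, Quaternion.self_mul_star, coe_dvd_coe_iff] at hcg
  rw [pow_add]
  exact (mul_dvd_mul ha hbg).trans hnorm

theorem admissible_components {c g : ℝ[X]} {Q D : Hq[X]} (hmotion : IsMotion (mp (qPoly c * Q) D))
    (hred : ReducedD (mp (qPoly c * Q) D)) (hbdd : BoundedD (mp (qPoly c * Q) D))
    (hQ : ReducedQ Q) (hg : IsMrpf3 g c (cstar Q * D) (D * cstar Q))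
    (hcg : RDvdQ (c * g) (D * cstar D)) :
    Admissible (components (qPoly c * Q)) (components D) where
  study := (isMotion_mp_iff.1 hmotion).2
  bounded a ha := hbdd a (by rwa [primal_mp, rDvdQ_iff])
  reduced _ hm hF hP := not_coe_dvd_components_of_reducedD hred hm hF hP
  norm F hm hF := by
    have hc : c ≠ 0 := qPoly_eq_zero.not.1 (left_ne_zero_of_mul (isMotion_mp_iff.1 hmotion).1)
    exact normCondition_components hm hF hc hQ hg hcg

end Reduction

end MotionPolynomial

/-- Sufficiency: if `c·g` divides `D·D*`, then the bounded monic reduced motion polynomial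
`M = cQ + εD` with reduced `Q` admits a factorization into monic linear motion polynomial
factors. -/
theorem final_characterization_sufficiency
    (c : ℝ[X]) (Q D : Hq[X]) (g : ℝ[X]) (M : DHq[X])
    (hM : M = mp (qPoly c * Q) D)
    (hmonic : M.Monic) (hmotion : IsMotion M)
    (hred : ReducedD M) (hbdd : BoundedD M) (hQred : ReducedQ Q)
    (hg : IsMrpf3 g c (cstar Q * D) (D * cstar Q))
    (hcg : RDvdQ (c * g) (D * cstar D)) :
    HasLinFact M := by
  subst hM
  exact MotionPolynomial.hasLinFact_of_admissible
    (MotionPolynomial.admissible_components hmotion hred hbdd hQred hg hcg) hmonic
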